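/- Let A = ⟨Q,Σ⟩ be a PFA with |Q| = n and |Σ| = m, let ℓ > 0, let φ be a satisfying assignment for the SAT instance (V,C) encoding (A,ℓ), let χ : {1,…,ℓ} → {1,…,m} assign to each t the unique i with φ(x_{i,t}) = 1, let w = a_{χ(1)}⋯a_{χ(ℓ)}, and let w_t denote the length-t prefix of w (w_0 = ε). Then for each t = 0,1,…,ℓ, the set δ(Q,w_t) is nonempty. -/

import Mathlib

open Set

/-- The extension of the transition function of a PFA (with states `Fin n` and letters
`Fin m`) to subsets of states and words: `δ(S,ε) = S`, `δ(S,va) = ⋃_{q ∈ δ(S,v)} δ(q,a)`. -/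
def pfaExt {n m : ℕ} (δ : Fin n → Fin m → Option (Fin n))
    (S : Set (Fin n)) (w : List (Fin m)) : Set (Fin n) :=
  w.foldl (fun T a => {p | ∃ q ∈ T, δ q a = some p}) S

/-- A nonempty word `w = a₁⋯a_ℓ` is carefully synchronizing for the PFA `δ` if (C1) its
first letter is defined at every state, (C2) for `1 < t ≤ ℓ` the letter `a_t` is defined
at every state of `δ(Q, a₁⋯a_{t-1})`, and (C3) `|δ(Q,w)| = 1`. -/
def CarefulSync {n m : ℕ} (δ : Fin n → Fin m → Option (Fin n)) (w : List (Fin m)) : Prop :=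
  w ≠ [] ∧
  (∀ t : Fin w.length, ∀ q ∈ pfaExt δ Set.univ (w.take t.val), (δ q (w.get t)).isSome) ∧
  (pfaExt δ Set.univ w).ncard = 1

/-- Boolean variables of the SAT instance encoding `(A, ℓ)`: letter variables `x i t`
(`1 ≤ i ≤ m`, `1 ≤ t ≤ ℓ`) and state variables `y j t` (`1 ≤ j ≤ n`, `0 ≤ t ≤ ℓ`). -/
inductive SatVar (n m ℓ : ℕ) : Type where
  | x : Fin m → Fin ℓ → SatVar n m ℓ
  | y : Fin n → Fin (ℓ + 1) → SatVar n m ℓ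
deriving DecidableEq

/-- A literal: a variable together with a polarity (`true` = positive, `false` = negated). -/
abbrev SatLit (n m ℓ : ℕ) := SatVar n m ℓ × Bool

/-- A clause is a disjunction of literals, represented as a list. -/
abbrev SatClause (n m ℓ : ℕ) := List (SatLit n m ℓ)

/-- A truth assignment satisfies a clause if it makes at least one of its literals true. -/
def SatisfiesClause {n m ℓ : ℕ} (φ : SatVar n m ℓ → Bool) (c : SatClause n m ℓ) : Prop :=
  ∃ l ∈ c, φ l.1 = l.2

/-- A truth assignment satisfies a set of clauses if it satisfies every clause in it. -/
def Satisfies {n m ℓ : ℕ} (φ : SatVar n m ℓ → Bool) (C : Set (SatClause n m ℓ)) : Prop :=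
  ∀ c ∈ C, SatisfiesClause φ c

/-- The group `I` of initial clauses: the unit clauses `y_{j,0}` for `1 ≤ j ≤ n`. -/
def clausesI (n m ℓ : ℕ) : Set (SatClause n m ℓ) :=
  {c | ∃ j : Fin n, c = [(SatVar.y j 0, true)]}

/-- The group `L` of letter clauses: for each `t`, the clause `x_{1,t} ∨ ⋯ ∨ x_{m,t}`
and the clauses `¬x_{r,t} ∨ ¬x_{s,t}` for `1 ≤ r < s ≤ m`. -/
def clausesL (n m ℓ : ℕ) : Set (SatClause n m ℓ) :=
  {c | ∃ t : Fin ℓ, c = (List.finRange m).map fun i => ((SatVar.x i t : SatVar n m ℓ), true)} ∪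
  {c | ∃ t : Fin ℓ, ∃ r s : Fin m, r < s ∧
    c = [(SatVar.x r t, false), (SatVar.x s t, false)]}

/-- The group `T` of transition clauses: for each `t` and each pair `(q_j, a_i)`, the
clause `¬y_{j,t-1} ∨ ¬x_{i,t} ∨ y_{k,t}` if `δ(q_j, a_i) = {q_k}`, and the clause
`¬y_{j,t-1} ∨ ¬x_{i,t}` if `δ(q_j, a_i)` is undefined. -/
def clausesT {n m : ℕ} (δ : Fin n → Fin m → Option (Fin n)) (ℓ : ℕ) :
    Set (SatClause n m ℓ) :=
  {c | ∃ (t : Fin ℓ) (j : Fin n) (i : Fin m) (k : Fin n), δ j i = some k ∧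
    c = [(SatVar.y j t.castSucc, false), (SatVar.x i t, false), (SatVar.y k t.succ, true)]} ∪
  {c | ∃ (t : Fin ℓ) (j : Fin n) (i : Fin m), δ j i = none ∧
    c = [(SatVar.y j t.castSucc, false), (SatVar.x i t, false)]}

/-- The group `S` of synchronization clauses: `¬y_{r,ℓ} ∨ ¬y_{s,ℓ}` for `1 ≤ r < s ≤ n`. -/
def clausesS (n m ℓ : ℕ) : Set (SatClause n m ℓ) :=
  {c | ∃ r s : Fin n, r < s ∧
    c = [(SatVar.y r (Fin.last ℓ), false), (SatVar.y s (Fin.last ℓ), false)]}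

/-- The set `C = I ∪ L ∪ T ∪ S` of clauses of the SAT instance encoding `(A, ℓ)`. -/
def encodingClauses {n m : ℕ} (δ : Fin n → Fin m → Option (Fin n)) (ℓ : ℕ) :
    Set (SatClause n m ℓ) :=
  clausesI n m ℓ ∪ clausesL n m ℓ ∪ clausesT δ ℓ ∪ clausesS n m ℓ

/-- Claim 1: with `φ` a satisfying assignment of the SAT instance encoding `(A, ℓ)`,
`χ` the map assigning to each `t` the unique `i` with `φ(x_{i,t}) = 1`, and
`w = a_{χ(1)} ⋯ a_{χ(ℓ)}`, for each `t = 0, 1, …, ℓ` the set `δ(Q, w_t)` (where `w_t`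
is the length-`t` prefix of `w`) is nonempty. -/
theorem sat_active_states_nonempty {n m ℓ : ℕ} (hn : 0 < n) (hm : 0 < m) (hℓ : 0 < ℓ)
    (δ : Fin n → Fin m → Option (Fin n))
    (φ : SatVar n m ℓ → Bool) (hφ : Satisfies φ (encodingClauses δ ℓ))
    (χ : Fin ℓ → Fin m) (hχ : ∀ t : Fin ℓ, ∀ i : Fin m, φ (SatVar.x i t) = true ↔ i = χ t) :
    ∀ t : ℕ, t ≤ ℓ →
      (pfaExt δ Set.univ (((List.finRange ℓ).map χ).take t)).Nonempty := by
  have key : ∀ t : ℕ, ∀ ht : t ≤ ℓ,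
      ∃ q ∈ pfaExt δ Set.univ (((List.finRange ℓ).map χ).take t),
        φ (SatVar.y q ⟨t, Nat.lt_succ_of_le ht⟩) = true := by
    intro t
    induction t with
    | zero =>
      intro ht
      refine ⟨⟨0, hn⟩, by simp [pfaExt], ?_⟩
      obtain ⟨l, hl, h⟩ := hφ [(SatVar.y ⟨0, hn⟩ 0, true)]
        (Or.inl (Or.inl (Or.inl ⟨_, rfl⟩)))
      rw [List.mem_singleton] at hl
      subst hl
      exact h
    | succ t ih =>
      intro ht
      obtain ⟨q, hq, hy⟩ := ih (by omega)
      have hx : φ (SatVar.x (χ ⟨t, ht⟩) ⟨t, ht⟩) = true := (hχ _ _).2 rfl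
      have hy' : φ (SatVar.y q (Fin.castSucc ⟨t, ht⟩)) = true := hy
      cases hd : δ q (χ ⟨t, ht⟩) with
      | none =>
        obtain ⟨l, hl, h⟩ := hφ _ (Or.inl (Or.inr (Or.inr ⟨⟨t, ht⟩, q, χ ⟨t, ht⟩, hd, rfl⟩)))
        simp only [List.mem_cons, List.not_mem_nil, or_false] at hl
        rcases hl with rfl | rfl
        · exact absurd (hy'.symm.trans h) (by simp)
        · simp [hx] at h
      | some k =>
        refine ⟨k, ?_, ?_⟩
        · have hlen : t < ((List.finRange ℓ).map χ).length := by simpa using ht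
          rw [List.take_succ_eq_append_getElem hlen]
          unfold pfaExt at hq ⊢
          rw [List.foldl_append]
          refine ⟨q, hq, ?_⟩
          simpa using hd
        · obtain ⟨l, hl, h⟩ := hφ _
            (Or.inl (Or.inr (Or.inl ⟨⟨t, ht⟩, q, χ ⟨t, ht⟩, k, hd, rfl⟩)))
          simp only [List.mem_cons, List.not_mem_nil, or_false] at hl
          rcases hl with rfl | rfl | rfl
          · exact absurd (hy'.symm.trans h) (by simp)
          · simp [hx] at h
          · exact h
  intro t ht
  obtain ⟨q, hq, _⟩ := key t ht
  exact ⟨q, hq⟩
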